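/- For every integer k ≥ 1 and every complex number q with |q| < 1, one has (2k)! · (∏_{m=1}^∞ (1 − q^m)/(1 + q^m)) · C_k(q) = (−1)^k · ∑_{n=k}^∞ (−1)^n · 2n · ((n+k−1)!/(n−k)!) · q^{n²}. -/

import Mathlib

/-- MacMahon's odd generalized sum-of-divisors function `C_k(q)`, defined as the sum over all
strictly increasing `k`-tuples of positive integers. -/
noncomputable def macC (k : ℕ) (q : ℂ) : ℂ :=
  ∑' m : {m : Fin k → ℕ // StrictMono m ∧ ∀ i, 0 < m i},
    q ^ (∑ i, (2 * m.1 i - 1)) / ∏ i, (1 - q ^ (2 * m.1 i - 1)) ^ 2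

/-
With `X = (z + z⁻¹) / 2`, the finite Jacobi triple product reads
`∏_{i < N} (1 + 2 q^(2i+1) X + q^(2(2i+1))) = ∑_n q^(n²) [2N, N + n]_{q²} T_n(X)`,
where `T_n` is the Chebyshev polynomial. After `q ↦ -q`, the factor of `u = q^(2i+1)` on the left
equals `(1 - u)² (1 - 2 (u / (1 - u)²) (X - 1))`, so the coefficient of `(X - 1)^k` is, up to
`(-2)^k` and the product of the `(1 - u)²`, the sum defining `C_k` truncated at `N`. On the right
it is a sum of the Taylor coefficients `2^k / (2k)! · ∏_{j < k} (n² - j²)` of `T_n` at `1`.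
As `N → ∞`, each Gaussian binomial tends to `1 / (q²; q²)_∞` and is bounded uniformly, so dominated
convergence gives the infinite sum over `n ∈ ℤ`; its terms are even in `n`, vanish for `|n| < k`,
and `∏_{j < k} (n² - j²) = n (n+k-1)! / (n-k)!` for `n ≥ k`.
-/

open Finset Filter Topology Polynomial

section QBinomial

variable {R : Type*} [CommRing R]

/-- The `q`-Pochhammer symbol `(a; p)_n = (1 - a)(1 - ap) ⋯ (1 - ap^(n-1))`, with base `p`. -/
def qPochhammer (a p : R) (n : ℕ) : R := ∏ i ∈ range n, (1 - a * p ^ i)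

lemma qPochhammer_succ (a p : R) (n : ℕ) :
    qPochhammer a p (n + 1) = qPochhammer a p n * (1 - a * p ^ n) :=
  prod_range_succ _ _

lemma qPochhammer_self_two_mul (q : R) (N : ℕ) :
    qPochhammer q q (2 * N) = qPochhammer q (q ^ 2) N * qPochhammer (q ^ 2) (q ^ 2) N := by
  induction N with
  | zero => simp [qPochhammer]
  | succ N ih =>
    rw [mul_add_one, qPochhammer_succ, qPochhammer_succ, ih, qPochhammer_succ, qPochhammer_succ]
    ring

lemma qPochhammer_neg_mul_qPochhammer (a p : R) (n : ℕ) :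
    qPochhammer (-a) p n * qPochhammer a p n = qPochhammer (a ^ 2) (p ^ 2) n := by
  rw [qPochhammer, qPochhammer, qPochhammer, ← prod_mul_distrib]
  exact prod_congr rfl fun i _ => by ring

/-- The Gaussian binomial coefficient with base `p`, defined by the `q`-Pascal recursion so that it
makes sense in every commutative ring. The lower index is an integer, with value `0` outside
`0 ≤ j ≤ m`; the truncation in `j.toNat` only affects terms in which the other factor vanishes. -/
def gaussBinom (p : R) : ℕ → ℤ → R
  | 0, j => if j = 0 then 1 else 0
  | m + 1, j => gaussBinom p m (j - 1) + p ^ j.toNat * gaussBinom p m j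

lemma gaussBinom_succ (p : R) (m : ℕ) (j : ℤ) :
    gaussBinom p (m + 1) j = gaussBinom p m (j - 1) + p ^ j.toNat * gaussBinom p m j :=
  rfl

lemma gaussBinom_eq_zero_of_neg (p : R) (m : ℕ) {j : ℤ} (hj : j < 0) : gaussBinom p m j = 0 := by
  induction m generalizing j with
  | zero => exact if_neg hj.ne
  | succ m ih => rw [gaussBinom_succ, ih (by lia), ih hj, mul_zero, add_zero]

lemma gaussBinom_eq_zero_of_lt (p : R) {m : ℕ} {j : ℤ} (hj : m < j) : gaussBinom p m j = 0 := by
  induction m generalizing j with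
  | zero => exact if_neg (by lia)
  | succ m ih => rw [gaussBinom_succ, ih (by lia), ih (by lia), mul_zero, add_zero]

lemma gaussBinom_zero_right (p : R) (m : ℕ) : gaussBinom p m 0 = 1 := by
  induction m with
  | zero => exact if_pos rfl
  | succ m ih => simp [gaussBinom_succ, ih, gaussBinom_eq_zero_of_neg]

lemma gaussBinom_self (p : R) (m : ℕ) : gaussBinom p m m = 1 := by
  induction m with
  | zero => exact if_pos rfl
  | succ m ih => simp [gaussBinom_succ, ih, gaussBinom_eq_zero_of_lt]

-- Where the Gaussian binomial is nonzero, both exponents are nonnegative and `toNat` is exact.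
lemma pow_toNat_mul_pow_toNat_mul_gaussBinom (p : R) {m : ℕ} {j a b : ℤ} (ha : j ≤ a)
    (hb : m - j ≤ b) :
    p ^ a.toNat * p ^ b.toNat * gaussBinom p m j = p ^ (a + b).toNat * gaussBinom p m j := by
  rcases lt_or_ge j 0 with hj | hj
  · simp [gaussBinom_eq_zero_of_neg p m hj]
  rcases lt_or_ge (m : ℤ) j with hm | hm
  · simp [gaussBinom_eq_zero_of_lt p hm]
  · rw [← pow_add, Int.toNat_add (hj.trans ha) (by lia)]

lemma gaussBinom_succ' (p : R) (m : ℕ) (j : ℤ) :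
    gaussBinom p (m + 1) j =
      p ^ (m + 1 - j).toNat * gaussBinom p m (j - 1) + gaussBinom p m j := by
  induction m generalizing j with
  | zero =>
    rcases lt_trichotomy j 0 with hj | rfl | hj
    · simp [gaussBinom, hj.ne, show j - 1 ≠ 0 by lia]
    · simp [gaussBinom]
    · obtain rfl | hj := (show 1 ≤ j from hj).eq_or_lt
      · simp [gaussBinom]
      · simp [gaussBinom, show j ≠ 0 by lia, show j - 1 ≠ 0 by lia]
  | succ m ih =>
    have left := pow_toNat_mul_pow_toNat_mul_gaussBinom p (m := m) (j := j - 1) (a := j)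
      (b := m + 1 - j) (by lia) (by lia)
    have right := pow_toNat_mul_pow_toNat_mul_gaussBinom p (m := m) (j := j - 1) (a := j - 1)
      (b := m + 2 - j) (by lia) (by lia)
    rw [show j + (m + 1 - j) = m + 1 by ring] at left
    rw [show j - 1 + (m + 2 - j) = m + 1 by ring] at right
    have ih_left := ih (j - 1)
    rw [show (m : ℤ) + 1 - (j - 1) = m + 2 - j by ring] at ih_left
    rw [gaussBinom_succ p (m + 1) j, Nat.cast_add_one, show (m : ℤ) + 1 + 1 - j = m + 2 - j by ring]
    linear_combination ih_left + p ^ j.toNat * ih j + left - right -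
      p ^ (m + 2 - j).toNat * gaussBinom_succ p m (j - 1) - gaussBinom_succ p m j

lemma gaussBinom_add_two (p : R) (m : ℕ) (j : ℤ) :
    gaussBinom p (m + 2) j = (1 + p ^ (m + 1)) * gaussBinom p m (j - 1) +
      p ^ (m + 2 - j).toNat * gaussBinom p m (j - 2) + p ^ j.toNat * gaussBinom p m j := by
  have middle := pow_toNat_mul_pow_toNat_mul_gaussBinom p (m := m) (j := j - 1) (a := j - 1)
    (b := m + 2 - j) (by lia) (by lia)
  rw [show j - 1 + (m + 2 - j) = (m + 1 : ℕ) by push_cast; ring, Int.toNat_natCast] at middle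
  rw [gaussBinom_succ', gaussBinom_succ p m (j - 1), gaussBinom_succ p m j,
    show j - 1 - 1 = j - 2 by ring]
  push_cast
  rw [show (m : ℤ) + 1 + 1 - j = m + 2 - j by ring]
  linear_combination middle

lemma gaussBinom_mul_qPochhammer (p : R) (a b : ℕ) :
    gaussBinom p (a + b) a * (qPochhammer p p a * qPochhammer p p b) =
      qPochhammer p p (a + b) := by
  induction a generalizing b with
  | zero => simp [gaussBinom_zero_right, qPochhammer]
  | succ a iha =>
    induction b with
    | zero => rw [Nat.add_zero, gaussBinom_self]; simp [qPochhammer]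
    | succ b ihb =>
      have pascal : gaussBinom p (a + 1 + (b + 1)) ((a + 1 : ℕ) : ℤ) =
          gaussBinom p (a + (b + 1)) a + p ^ (a + 1) * gaussBinom p (a + 1 + b) (a + 1 : ℕ) := by
        rw [← add_assoc, gaussBinom_succ, add_right_comm a 1 b, add_assoc a b 1]
        simp
      have ha := iha (b + 1)
      rw [show a + (b + 1) = a + 1 + b by ring] at ha pascal
      rw [qPochhammer_succ _ _ b] at ha ⊢
      rw [qPochhammer_succ _ _ a] at ihb ⊢
      rw [pascal, ← add_assoc, qPochhammer_succ _ _ (a + 1 + b)]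
      linear_combination (1 - p * p ^ a) * ha + p ^ (a + 1) * (1 - p * p ^ b) * ihb

end QBinomial

section FiniteTripleProduct

variable {R : Type*} [CommRing R]

/-- The coefficients `q^(n²) [2N, N + n]_{q²}` of the finite Jacobi triple product
`∏_{i < N} (1 + q^(2i+1) z)(1 + q^(2i+1) z⁻¹)`, which tend to the theta coefficients `q^(n²)` up to
the factor `1 / (q²; q²)_∞`. -/
def thetaCoeff (q : R) (N : ℕ) (n : ℤ) : R :=
  q ^ n.natAbs ^ 2 * gaussBinom (q ^ 2) (2 * N) (N + n)

lemma thetaCoeff_eq_zero (q : R) {N : ℕ} {n : ℤ} (hn : N < n.natAbs) : thetaCoeff q N n = 0 := by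
  rw [thetaCoeff]
  rcases le_total 0 n with h | h
  · rw [gaussBinom_eq_zero_of_lt _ (by lia), mul_zero]
  · rw [gaussBinom_eq_zero_of_neg _ _ (by lia), mul_zero]

lemma hasFiniteSupport_thetaCoeff (q : R) (N : ℕ) :
    Function.HasFiniteSupport (thetaCoeff q N) := by
  refine (Set.finite_Icc (-N : ℤ) N).subset fun n hn => ?_
  have : ¬ N < n.natAbs := fun h => hn (thetaCoeff_eq_zero q h)
  exact ⟨by lia, by lia⟩

lemma thetaCoeff_succ (q : R) (N : ℕ) (n : ℤ) :
    thetaCoeff q (N + 1) n = (1 + (q ^ (2 * N + 1)) ^ 2) * thetaCoeff q N n +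
      q ^ (2 * N + 1) * (thetaCoeff q N (n - 1) + thetaCoeff q N (n + 1)) := by
  have left : q ^ (2 * N + 1) * thetaCoeff q N (n - 1) =
      q ^ n.natAbs ^ 2 * ((q ^ 2) ^ (N + 1 - n).toNat *
        gaussBinom (q ^ 2) (2 * N) (N + n - 1)) := by
    rw [thetaCoeff, ← add_sub_assoc]
    rcases lt_or_ge (N + 1 : ℤ) n with h | h
    · simp [gaussBinom_eq_zero_of_lt (q ^ 2) (show ((2 * N : ℕ) : ℤ) < N + n - 1 by lia)]
    · rw [← mul_assoc, ← mul_assoc, ← pow_mul, ← pow_add, ← pow_add]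
      congr 2
      zify
      rw [sq_abs, sq_abs, Int.toNat_of_nonneg (by lia)]
      ring
  have right : q ^ (2 * N + 1) * thetaCoeff q N (n + 1) =
      q ^ n.natAbs ^ 2 * ((q ^ 2) ^ (N + 1 + n).toNat *
        gaussBinom (q ^ 2) (2 * N) (N + n + 1)) := by
    rw [thetaCoeff, ← add_assoc]
    rcases lt_or_ge (N + 1 + n : ℤ) 0 with h | h
    · simp [gaussBinom_eq_zero_of_neg (q ^ 2) (2 * N) (show (N + n + 1 : ℤ) < 0 by lia)]
    · rw [← mul_assoc, ← mul_assoc, ← pow_mul, ← pow_add, ← pow_add]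
      congr 2
      zify
      rw [sq_abs, sq_abs, Int.toNat_of_nonneg (by lia)]
      ring
  have pascal := gaussBinom_add_two (q ^ 2) (2 * N) (N + 1 + n)
  rw [show ((2 * N : ℕ) : ℤ) + 2 - (N + 1 + n) = N + 1 - n by push_cast; ring,
    show (N : ℤ) + 1 + n - 1 = N + n by ring,
    show (N : ℤ) + 1 + n - 2 = N + n - 1 by ring] at pascal
  rw [mul_add, left, right, thetaCoeff, thetaCoeff, mul_add 2 N 1, Nat.cast_add_one, pascal,
    show (N : ℤ) + 1 + n = N + n + 1 by ring]
  ring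

lemma finsum_thetaCoeff_succ_smul {M : Type*} [AddCommGroup M] [Module R M] (q : R) (N : ℕ)
    (f : ℤ → M) :
    ∑ᶠ n, thetaCoeff q (N + 1) n • f n =
      (1 + (q ^ (2 * N + 1)) ^ 2) • ∑ᶠ n, thetaCoeff q N n • f n +
        q ^ (2 * N + 1) • ∑ᶠ n, thetaCoeff q N n • (f (n + 1) + f (n - 1)) := by
  have hfin (g : ℤ → M) : Function.HasFiniteSupport fun n => thetaCoeff q N n • g n :=
    (hasFiniteSupport_thetaCoeff q N).subset fun n hn h => hn (by simp [h])
  have shift_left : ∑ᶠ n, thetaCoeff q N (n - 1) • f n = ∑ᶠ n, thetaCoeff q N n • f (n + 1) := by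
    simpa using finsum_comp_equiv (Equiv.subRight (1 : ℤ))
      (f := fun n => thetaCoeff q N n • f (n + 1))
  have shift_right : ∑ᶠ n, thetaCoeff q N (n + 1) • f n = ∑ᶠ n, thetaCoeff q N n • f (n - 1) := by
    simpa using finsum_comp_equiv (Equiv.addRight (1 : ℤ))
      (f := fun n => thetaCoeff q N n • f (n - 1))
  have hfin_left : Function.HasFiniteSupport fun n => thetaCoeff q N (n - 1) • f n := by
    simpa using (hfin fun n => f (n + 1)).fun_comp_of_injective (Equiv.subRight (1 : ℤ)).injective
  have hfin_right : Function.HasFiniteSupport fun n => thetaCoeff q N (n + 1) • f n := by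
    simpa using (hfin fun n => f (n - 1)).fun_comp_of_injective (Equiv.addRight (1 : ℤ)).injective
  have hfin_add : Function.HasFiniteSupport
      fun n => thetaCoeff q N (n - 1) • f n + thetaCoeff q N (n + 1) • f n :=
    hfin_left.add hfin_right
  have hfin_smul {g : ℤ → M} (c : R) (hg : Function.HasFiniteSupport g) :
      Function.HasFiniteSupport fun n => c • g n :=
    hg.subset (Function.support_const_smul_subset c g)
  simp only [thetaCoeff_succ, add_smul _ _ (f _), mul_smul, smul_add (thetaCoeff q N _)]
  rw [finsum_add_distrib (hfin_smul _ (hfin f)) (hfin_smul _ hfin_add),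
    ← smul_finsum' _ (hfin f), ← smul_finsum' _ hfin_add,
    finsum_add_distrib hfin_left hfin_right, shift_left, shift_right,
    finsum_add_distrib (hfin fun n => f (n + 1)) (hfin fun n => f (n - 1))]

lemma prod_one_add_mul_X_add_eq_finsum_chebyshev (q : R) (N : ℕ) :
    ∏ i ∈ range N, (1 + 2 * C (q ^ (2 * i + 1)) * X + C (q ^ (2 * i + 1)) ^ 2) =
      ∑ᶠ n, thetaCoeff q N n • Chebyshev.T R n := by
  induction N with
  | zero =>
    rw [prod_range_zero, finsum_eq_single _ 0]
    · simp [thetaCoeff, gaussBinom]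
    · intro n hn
      rw [thetaCoeff_eq_zero q (by lia), zero_smul]
  | succ N ih =>
    have three_term (n : ℤ) :
        Chebyshev.T R (n + 1) + Chebyshev.T R (n - 1) = (2 * X : R[X]) * Chebyshev.T R n := by
      rw [Chebyshev.T_add_one, sub_add_cancel]
    rw [prod_range_succ, ih, finsum_thetaCoeff_succ_smul]
    simp only [three_term, ← mul_smul_comm]
    rw [← mul_finsum']
    · simp only [smul_eq_C_mul, map_add, map_one, map_pow]
      ring
    · exact (hasFiniteSupport_thetaCoeff q N).subset fun n hn h => hn (by simp [h])

end FiniteTripleProduct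

section CentralFactorial

variable {R : Type*} [CommRing R]

/-- The even central factorial `x² (x² - 1²) ⋯ (x² - (k-1)²)`, which at an integer `n` is the `k`-th
derivative of the Chebyshev polynomial `T_n` at `1` up to a factor independent of `n`. -/
def centralFactorial (x : R) (k : ℕ) : R := ∏ j ∈ range k, (x ^ 2 - (j : R) ^ 2)

lemma centralFactorial_neg (x : R) (k : ℕ) : centralFactorial (-x) k = centralFactorial x k := by
  simp only [centralFactorial, neg_sq]

lemma centralFactorial_natCast_eq_zero {n k : ℕ} (h : n < k) :
    centralFactorial (n : R) k = 0 :=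
  prod_eq_zero (mem_range.mpr h) (sub_self _)

lemma centralFactorial_natCast_mul_factorial {n k : ℕ} (hk : 1 ≤ k) (hn : k ≤ n) :
    centralFactorial (n : R) k * ((n - k).factorial : R) = n * ((n + k - 1).factorial : R) := by
  induction k, hk using Nat.le_induction with
  | base =>
    obtain ⟨m, rfl⟩ := Nat.exists_eq_add_of_le' hn
    simp only [centralFactorial, range_one, prod_singleton, Nat.add_sub_cancel,
      Nat.factorial_succ]
    push_cast
    ring
  | succ k hk ih =>
    obtain ⟨m, rfl⟩ := Nat.exists_eq_add_of_le' hn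
    obtain ⟨l, rfl⟩ := Nat.exists_eq_add_of_le' hk
    have ih := ih (by lia)
    rw [show m + (l + 1 + 1) - (l + 1) = m + 1 by lia,
      show m + (l + 1 + 1) + (l + 1) - 1 = m + 2 * l + 2 by lia, Nat.factorial_succ m] at ih
    rw [Nat.add_sub_cancel, show m + (l + 1 + 1) + (l + 1 + 1) - 1 = m + 2 * l + 2 + 1 by lia,
      Nat.factorial_succ, centralFactorial, prod_range_succ, ← centralFactorial]
    push_cast at ih ⊢
    linear_combination (m + 2 * l + 3 : R) * ih

lemma factorial_two_mul (k : ℕ) :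
    (2 * k).factorial = k.factorial * 2 ^ k * ∏ l ∈ range k, (2 * l + 1) := by
  induction k with
  | zero => rfl
  | succ k ih =>
    rw [mul_add_one, Nat.factorial_succ, Nat.factorial_succ, ih, prod_range_succ,
      Nat.factorial_succ]
    ring

lemma factorial_mul_coeff_taylor_one_chebyshev (k : ℕ) (n : ℤ) :
    ((2 * k).factorial : R) * (taylor 1 (Chebyshev.T R n)).coeff k =
      2 ^ k * centralFactorial (n : R) k := by
  have hasse : (k.factorial : R) * (taylor 1 (Chebyshev.T R n)).coeff k =
      eval 1 (derivative^[k] (Chebyshev.T R n)) := by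
    rw [taylor_coeff, ← factorial_smul_hasseDeriv, LinearMap.smul_apply, eval_smul, nsmul_eq_mul]
  have key := Chebyshev.iterate_derivative_T_eval_one (R := R) n k
  rw [← hasse] at key
  rw [factorial_two_mul, centralFactorial]
  push_cast at key ⊢
  rw [← key]
  ring

lemma factorial_mul_coeff_taylor_one_prod (q : R) (N k : ℕ) :
    ((2 * k).factorial : R) * (taylor 1 (∏ i ∈ range N,
        (1 + 2 * C (q ^ (2 * i + 1)) * X + C (q ^ (2 * i + 1)) ^ 2))).coeff k =
      2 ^ k * ∑ᶠ n : ℤ, thetaCoeff q N n * centralFactorial (n : R) k := by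
  have hfin (f : ℤ → R) : Function.HasFiniteSupport fun n => thetaCoeff q N n * f n :=
    (hasFiniteSupport_thetaCoeff q N).mul_left f
  have hfin_T : Function.HasFiniteSupport fun n => thetaCoeff q N n • Chebyshev.T R n :=
    (hasFiniteSupport_thetaCoeff q N).subset fun n hn h => hn (by simp [h])
  have coeff_finsum : (taylor 1 (∑ᶠ n, thetaCoeff q N n • Chebyshev.T R n)).coeff k =
      ∑ᶠ n, thetaCoeff q N n * (taylor 1 (Chebyshev.T R n)).coeff k := by
    simpa using (lcoeff R k ∘ₗ taylor 1).toAddMonoidHom.map_finsum hfin_T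
  rw [prod_one_add_mul_X_add_eq_finsum_chebyshev, coeff_finsum, mul_finsum' _ _ (hfin _),
    mul_finsum' _ _ (hfin _)]
  simp only [mul_left_comm _ (thetaCoeff q N _), factorial_mul_coeff_taylor_one_chebyshev]

end CentralFactorial

section FiniteIdentity

lemma coeff_prod_one_add_C_mul_X {R ι : Type*} [CommSemiring R] (s : Finset ι) (a : ι → R) (k : ℕ) :
    (∏ i ∈ s, (1 + C (a i) * X)).coeff k = ∑ t ∈ powersetCard k s, ∏ i ∈ t, a i := by
  classical
  simp only [prod_one_add, prod_mul_distrib, prod_const, ← map_prod, finsetSum_coeff,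
    coeff_C_mul_X_pow, powersetCard_eq_filter, sum_filter, eq_comm]

variable {K : Type*} [Field K]

/-- The summand of `C_1(q)` with odd exponent `2i + 1`, indexed from `i = 0`: `C_k(q)` is the `k`-th
elementary symmetric function of these weights. -/
def macWeight (q : K) (i : ℕ) : K := q ^ (2 * i + 1) / (1 - q ^ (2 * i + 1)) ^ 2

lemma taylor_one_one_add_two_mul_C_neg_mul_X_add_sq {u : K} (hu : 1 - u ≠ 0) :
    taylor 1 (1 + 2 * C (-u) * X + C (-u) ^ 2) =
      C ((1 - u) ^ 2) * (1 + C (-2 * (u / (1 - u) ^ 2)) * X) := by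
  have hC : C ((1 - u) ^ 2) * C (u / (1 - u) ^ 2) = C u := by
    rw [← C_mul, mul_div_cancel₀ _ (pow_ne_zero 2 hu)]
  rw [taylor_apply]
  simp only [add_comp, one_comp, mul_comp, neg_comp, ofNat_comp, C_comp, X_comp, pow_comp,
    C_neg, C_mul, C_pow, C_sub, C_1, C_ofNat] at hC ⊢
  linear_combination (2 * X) * hC

lemma factorial_mul_sum_macWeight [NeZero (2 : K)] {q : K} (N k : ℕ)
    (hq : ∀ i ∈ range N, 1 - q ^ (2 * i + 1) ≠ 0) :
    ((2 * k).factorial : K) * ((-1) ^ k * (qPochhammer q (q ^ 2) N ^ 2 *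
        ∑ S ∈ powersetCard k (range N), ∏ i ∈ S, macWeight q i)) =
      ∑ᶠ n : ℤ, thetaCoeff (-q) N n * centralFactorial (n : K) k := by
  -- At `X = 1` the factor of `u = q ^ (2 * i + 1)` is `(1 - u) ^ 2 - 2 * u * (X - 1)`.
  have expand : taylor 1 (∏ i ∈ range N, (1 + 2 * C (-q ^ (2 * i + 1)) * X +
        C (-q ^ (2 * i + 1)) ^ 2)) =
      C (qPochhammer q (q ^ 2) N ^ 2) * ∏ i ∈ range N, (1 + C (-2 * macWeight q i) * X) := by
    refine (map_prod (taylorAlgHom (1 : K)) _ _).trans ?_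
    rw [qPochhammer, ← prod_pow, map_prod, ← prod_mul_distrib]
    refine prod_congr rfl fun i hi =>
      (taylor_one_one_add_two_mul_C_neg_mul_X_add_sq (hq i hi)).trans ?_
    rw [macWeight]
    ring_nf
  have key := factorial_mul_coeff_taylor_one_prod (-q) N k
  simp only [Odd.neg_pow ⟨_, rfl⟩] at key
  rw [expand, coeff_C_mul, coeff_prod_one_add_C_mul_X] at key
  have extract_scalar (S : Finset ℕ) (hS : S ∈ powersetCard k (range N)) :
      ∏ i ∈ S, (-2 * macWeight q i) = (-2) ^ k * ∏ i ∈ S, macWeight q i := by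
    rw [prod_mul_distrib, prod_const, (mem_powersetCard.mp hS).2]
  rw [sum_congr rfl extract_scalar, ← mul_sum, neg_pow] at key
  refine mul_left_cancel₀ (pow_ne_zero k (two_ne_zero (α := K))) ?_
  linear_combination key

end FiniteIdentity

section Summation

variable {M : Type*} [AddCommGroup M] [UniformSpace M] [IsUniformAddGroup M] [CompleteSpace M]

lemma tendsto_sum_powersetCard_range {f : Finset ℕ → M} (hf : Summable f) (k : ℕ) :
    Tendsto (fun N => ∑ S ∈ powersetCard k (range N), f S) atTop
      (𝓝 (∑' S : Set.powersetCard ℕ k, f S)) := by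
  have h := (hf.indicator (Set.powersetCard ℕ k)).hasSum.comp
    (tendsto_finset_powerset_atTop_atTop.comp tendsto_finset_range)
  rw [← _root_.tsum_subtype] at h
  refine h.congr fun N => ?_
  rw [powersetCard_eq_filter, sum_filter]
  exact sum_congr rfl fun S _ => by simp only [Set.indicator, Set.powersetCard.mem_iff]

lemma tsum_int_eq_two_nsmul_tsum_of_even [T2Space M] {f : ℤ → M} (hf : Summable f)
    (heven : f.Even) {k : ℕ} (hk : 1 ≤ k) (hzero : ∀ n : ℕ, n < k → f n = 0) :
    ∑' n, f n = 2 • ∑' n : {n : ℕ // k ≤ n}, f (n : ℕ) := by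
  have hnat : HasSum (fun n : ℕ => f n) (∑' n : ℕ, f n) :=
    (hf.comp_injective Nat.cast_injective).hasSum
  have hneg : HasSum (fun n : ℕ => f (-n)) (∑' n : ℕ, f n) := by
    simpa only [heven _] using hnat
  have hsupport : Function.support (fun n : ℕ => f n) ⊆ {n | k ≤ n} := fun n hn =>
    not_lt.mp fun h => hn (hzero n h)
  have hf0 : f 0 = 0 := hzero 0 hk
  rw [(HasSum.of_nat_of_neg hnat hneg).tsum_eq, hf0, sub_zero, ← two_nsmul]
  exact congrArg (2 • ·) (tsum_subtype_eq_of_support_subset hsupport).symm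

end Summation

section NormBounds

variable {𝕜 : Type*} [NormedField 𝕜]

lemma one_sub_ne_zero_of_norm_lt_one {x : 𝕜} (hx : ‖x‖ < 1) : 1 - x ≠ 0 := by
  intro h
  rw [← sub_eq_zero.mp h, norm_one] at hx
  exact hx.false

lemma norm_pow_lt_one_of_norm_lt_one {x : 𝕜} (hx : ‖x‖ < 1) {n : ℕ} (hn : n ≠ 0) :
    ‖x ^ n‖ < 1 := by
  rw [norm_pow]
  exact pow_lt_one₀ (norm_nonneg x) hx hn

lemma norm_mul_pow_lt_one {a p : 𝕜} (ha : ‖a‖ < 1) (hp : ‖p‖ < 1) (i : ℕ) :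
    ‖a * p ^ i‖ < 1 := by
  rw [norm_mul, norm_pow]
  exact mul_lt_one_of_nonneg_of_lt_one_left (norm_nonneg _) ha (pow_le_one₀ (norm_nonneg _) hp.le)

lemma qPochhammer_ne_zero {a p : 𝕜} (ha : ‖a‖ < 1) (hp : ‖p‖ < 1) (n : ℕ) :
    qPochhammer a p n ≠ 0 :=
  prod_ne_zero_iff.mpr fun i _ => one_sub_ne_zero_of_norm_lt_one (norm_mul_pow_lt_one ha hp i)

lemma gaussBinom_eq_div {p : 𝕜} (hp : ‖p‖ < 1) (a b : ℕ) :
    gaussBinom p (a + b) a =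
      qPochhammer p p (a + b) / (qPochhammer p p a * qPochhammer p p b) :=
  eq_div_of_mul_eq (mul_ne_zero (qPochhammer_ne_zero hp hp a) (qPochhammer_ne_zero hp hp b))
    (gaussBinom_mul_qPochhammer p a b)

lemma prod_div_one_add_eq_qPochhammer {q : 𝕜} (hq : ‖q‖ < 1) (N : ℕ) :
    ∏ m ∈ range (2 * N), (1 - q ^ (m + 1)) / (1 + q ^ (m + 1)) =
      qPochhammer (q ^ 2) (q ^ 2) N ^ 2 * qPochhammer q (q ^ 2) N ^ 2 /
        qPochhammer (q ^ 2) (q ^ 2) (2 * N) := by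
  have hprod : ∏ m ∈ range (2 * N), (1 - q ^ (m + 1)) / (1 + q ^ (m + 1)) =
      qPochhammer q q (2 * N) / qPochhammer (-q) q (2 * N) := by
    simp only [qPochhammer, prod_div_distrib, pow_succ', neg_mul, sub_neg_eq_add]
  rw [hprod, ← mul_pow, mul_comm (qPochhammer (q ^ 2) (q ^ 2) N), ← qPochhammer_self_two_mul,
    ← qPochhammer_neg_mul_qPochhammer, sq,
    mul_div_mul_right _ _ (qPochhammer_ne_zero hq hq _)]

lemma summable_norm_mul_pow (a : 𝕜) {p : 𝕜} (hp : ‖p‖ < 1) :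
    Summable fun i : ℕ => ‖a * p ^ i‖ := by
  simpa only [norm_mul, norm_pow] using
    (summable_geometric_of_lt_one (norm_nonneg p) hp).mul_left ‖a‖

lemma summable_norm_macWeight {q : 𝕜} (hq : ‖q‖ < 1) : Summable fun i => ‖macWeight q i‖ := by
  have hq2 : ‖q ^ 2‖ < 1 := norm_pow_lt_one_of_norm_lt_one hq two_ne_zero
  have hsum : Summable fun i : ℕ => ‖q ^ (2 * i + 1)‖ := by
    simpa only [pow_succ', pow_mul] using summable_norm_mul_pow q hq2
  have hzero : Tendsto (fun i : ℕ => q ^ (2 * i + 1)) cofinite (𝓝 0) :=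
    tendsto_zero_iff_norm_tendsto_zero.mpr hsum.tendsto_cofinite_zero
  have hone : Tendsto (fun i : ℕ => ‖((1 - q ^ (2 * i + 1)) ^ 2)⁻¹‖) cofinite (𝓝 1) := by
    simpa using (((hzero.const_sub 1).pow 2).inv₀ (by simp)).norm
  simpa only [macWeight, norm_inv, div_eq_mul_inv, norm_mul] using
    Summable.mul_tendsto_const (f := fun i : ℕ => ‖q ^ (2 * i + 1)‖)
      (by simpa only [norm_norm] using hsum) hone

lemma norm_centralFactorial_natCast_le (n k : ℕ) :
    ‖centralFactorial (n : 𝕜) k‖ ≤ (n : ℝ) ^ (2 * k) := by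
  rcases lt_or_ge n k with h | h
  · rw [centralFactorial_natCast_eq_zero h, norm_zero]
    positivity
  rw [centralFactorial, norm_prod, pow_mul]
  refine (prod_le_prod (fun _ _ => norm_nonneg _) fun j hj => ?_).trans_eq
    ((prod_const _).trans (by rw [card_range]))
  have hjn : j ^ 2 ≤ n ^ 2 := Nat.pow_le_pow_left ((mem_range.mp hj).le.trans h) 2
  have hle := Nat.norm_cast_le (α := 𝕜) (n ^ 2 - j ^ 2)
  rw [norm_one, mul_one] at hle
  rw [← Nat.cast_pow, ← Nat.cast_pow, ← Nat.cast_sub hjn, ← Nat.cast_pow]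
  exact hle.trans (Nat.cast_le.mpr (Nat.sub_le _ _))

lemma summable_norm_pow_sq_mul_centralFactorial {q : 𝕜} (hq : ‖q‖ < 1) (k : ℕ) :
    Summable fun n : ℤ => ‖q ^ n.natAbs ^ 2 * centralFactorial (n : 𝕜) k‖ := by
  have hnat : Summable fun n : ℕ => ‖q ^ n ^ 2 * centralFactorial (n : 𝕜) k‖ := by
    have hgeom : Summable fun n : ℕ => (n : ℝ) ^ (2 * k) * ‖q‖ ^ n :=
      summable_pow_mul_geometric_of_norm_lt_one (2 * k) (by rwa [norm_norm])
    refine hgeom.of_nonneg_of_le (fun _ => norm_nonneg _) fun n => ?_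
    rw [norm_mul, norm_pow, mul_comm]
    exact mul_le_mul (norm_centralFactorial_natCast_le n k)
      (pow_le_pow_of_le_one (norm_nonneg q) hq.le (Nat.le_self_pow two_ne_zero n))
      (by positivity) (by positivity)
  refine Summable.of_nat_of_neg ?_ ?_
  · simpa using hnat
  · simpa [centralFactorial_neg] using hnat

end NormBounds

section Limits

variable {𝕜 : Type*} [NormedField 𝕜] [CompleteSpace 𝕜]

lemma multipliable_one_sub_mul_pow (a : 𝕜) {p : 𝕜} (hp : ‖p‖ < 1) :
    Multipliable fun i : ℕ => 1 - a * p ^ i := by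
  have h : Summable fun i : ℕ => ‖-(a * p ^ i)‖ := by
    simpa only [norm_neg] using summable_norm_mul_pow a hp
  simpa only [sub_eq_add_neg] using multipliable_one_add_of_summable h

lemma tprod_one_sub_mul_pow_ne_zero {a p : 𝕜} (ha : ‖a‖ < 1) (hp : ‖p‖ < 1) :
    ∏' i : ℕ, (1 - a * p ^ i) ≠ 0 := by
  simp only [sub_eq_add_neg]
  refine tprod_one_add_ne_zero_of_summable (fun i => ?_) ?_
  · rw [← sub_eq_add_neg]
    exact one_sub_ne_zero_of_norm_lt_one (norm_mul_pow_lt_one ha hp i)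
  · simpa only [norm_neg] using summable_norm_mul_pow a hp

lemma tendsto_qPochhammer (a : 𝕜) {p : 𝕜} (hp : ‖p‖ < 1) :
    Tendsto (qPochhammer a p) atTop (𝓝 (∏' i : ℕ, (1 - a * p ^ i))) :=
  (multipliable_one_sub_mul_pow a hp).tendsto_prod_tprod_nat

lemma tendsto_qPochhammer_sq_div_qPochhammer_two_mul {a p : 𝕜} (ha : ‖a‖ < 1) (hp : ‖p‖ < 1) :
    Tendsto (fun N => qPochhammer a p N ^ 2 / qPochhammer a p (2 * N)) atTop
      (𝓝 (∏' i : ℕ, (1 - a * p ^ i))) := by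
  have hP := tprod_one_sub_mul_pow_ne_zero ha hp
  have hQ := tendsto_qPochhammer a hp
  have h := (hQ.pow 2).div (hQ.comp (tendsto_id.const_mul_atTop' two_pos)) hP
  rwa [sq (∏' _, _), mul_div_cancel_right₀ _ hP] at h

lemma tendsto_prod_div_one_add {q : 𝕜} (hq : ‖q‖ < 1) :
    Tendsto (fun N => ∏ m ∈ range N, (1 - q ^ (m + 1)) / (1 + q ^ (m + 1))) atTop
      (𝓝 (∏' m : ℕ, (1 - q ^ (m + 1)) / (1 + q ^ (m + 1)))) := by
  have hneg : ‖-q‖ < 1 := by rwa [norm_neg]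
  have h := (multipliable_one_sub_mul_pow q hq).div₀ (multipliable_one_sub_mul_pow (-q) hq)
    (tprod_one_sub_mul_pow_ne_zero hneg hq)
  simp only [neg_mul, sub_neg_eq_add, ← pow_succ'] at h
  exact h.tendsto_prod_tprod_nat

lemma tendsto_gaussBinom_two_mul {p : 𝕜} (hp : ‖p‖ < 1) (n : ℤ) :
    Tendsto (fun N : ℕ => gaussBinom p (2 * N) (N + n)) atTop
      (𝓝 (∏' i : ℕ, (1 - p * p ^ i))⁻¹) := by
  set P := ∏' i : ℕ, (1 - p * p ^ i)
  have hP : P ≠ 0 := tprod_one_sub_mul_pow_ne_zero hp hp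
  have hQ : Tendsto (qPochhammer p p) atTop (𝓝 P) := tendsto_qPochhammer p hp
  have hshift (n : ℤ) : Tendsto (fun N : ℕ => (N + n).toNat) atTop atTop :=
    tendsto_atTop.mpr fun b => by
      filter_upwards [eventually_ge_atTop (b + n.natAbs)] with N hN
      lia
  have hlim : Tendsto (fun N : ℕ => qPochhammer p p (2 * N) /
      (qPochhammer p p (N + n).toNat * qPochhammer p p (N + -n).toNat)) atTop
      (𝓝 (P / (P * P))) :=
    (hQ.comp (tendsto_id.const_mul_atTop' two_pos)).div
      ((hQ.comp (hshift n)).mul (hQ.comp (hshift (-n)))) (mul_ne_zero hP hP)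
  rw [div_mul_cancel_left₀ hP] at hlim
  refine hlim.congr' ?_
  filter_upwards [eventually_ge_atTop n.natAbs] with N hN
  rw [show 2 * N = (N + n).toNat + (N + -n).toNat by lia, ← gaussBinom_eq_div hp,
    Int.toNat_of_nonneg (by lia)]

lemma exists_forall_norm_gaussBinom_le {p : 𝕜} (hp : ‖p‖ < 1) :
    ∃ B, ∀ m j, ‖gaussBinom p m j‖ ≤ B := by
  have hQ := tendsto_qPochhammer p hp
  obtain ⟨A, hA⟩ := (Metric.isBounded_range_of_tendsto _ hQ).exists_norm_le
  obtain ⟨A', hA'⟩ := (Metric.isBounded_range_of_tendsto _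
    (hQ.inv₀ (tprod_one_sub_mul_pow_ne_zero hp hp))).exists_norm_le
  simp only [Set.forall_mem_range] at hA hA'
  have hA0 : 0 ≤ A := (norm_nonneg _).trans (hA 0)
  have hA0' : 0 ≤ A' := (norm_nonneg _).trans (hA' 0)
  refine ⟨A * (A' * A'), fun m j => ?_⟩
  by_cases hj : 0 ≤ j ∧ j ≤ m
  · obtain ⟨a, rfl⟩ := Int.eq_ofNat_of_zero_le hj.1
    obtain ⟨b, rfl⟩ := Nat.exists_eq_add_of_le (Int.ofNat_le.mp hj.2)
    rw [gaussBinom_eq_div hp, div_eq_mul_inv, mul_inv, norm_mul, norm_mul]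
    gcongr
    exacts [hA _, hA' _, hA' _]
  · rcases not_and_or.mp hj with hj | hj
    · rw [gaussBinom_eq_zero_of_neg p m (by lia), norm_zero]
      positivity
    · rw [gaussBinom_eq_zero_of_lt p (by lia), norm_zero]
      positivity

lemma tendsto_finsum_thetaCoeff_mul {q : 𝕜} (hq : ‖q‖ < 1) {f : ℤ → 𝕜}
    (hf : Summable fun n => ‖q ^ n.natAbs ^ 2 * f n‖) :
    Tendsto (fun N => ∑ᶠ n, thetaCoeff q N n * f n) atTop
      (𝓝 ((∏' i : ℕ, (1 - q ^ 2 * (q ^ 2) ^ i))⁻¹ * ∑' n, q ^ n.natAbs ^ 2 * f n)) := by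
  have hq2 : ‖q ^ 2‖ < 1 := norm_pow_lt_one_of_norm_lt_one hq two_ne_zero
  obtain ⟨B, hB⟩ := exists_forall_norm_gaussBinom_le hq2
  have h_tsum (N : ℕ) : ∑ᶠ n, thetaCoeff q N n * f n =
      ∑' n : ℤ, gaussBinom (q ^ 2) (2 * N) (N + n) * (q ^ n.natAbs ^ 2 * f n) := by
    refine (tsum_eq_finsum (L := .unconditional ℤ)
      ((hasFiniteSupport_thetaCoeff q N).mul_left f)).symm.trans (tsum_congr fun n => ?_)
    rw [Pi.mul_apply, thetaCoeff]
    ring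
  simp only [h_tsum, ← tsum_mul_left]
  refine tendsto_tsum_of_dominated_convergence (hf.mul_left B)
    (fun n => (tendsto_gaussBinom_two_mul hq2 n).mul_const _)
    (Eventually.of_forall fun N n => ?_)
  rw [norm_mul]
  gcongr
  exact hB _ _

lemma tendsto_factorial_mul_sum_macWeight [NeZero (2 : 𝕜)] {q : 𝕜} (hq : ‖q‖ < 1) (k : ℕ) :
    Tendsto (fun N => ((2 * k).factorial : 𝕜) *
        (∏ m ∈ range (2 * N), (1 - q ^ (m + 1)) / (1 + q ^ (m + 1))) *
        ∑ S ∈ powersetCard k (range N), ∏ i ∈ S, macWeight q i) atTop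
      (𝓝 ((-1) ^ k * ∑' n : ℤ, (-q) ^ n.natAbs ^ 2 * centralFactorial (n : 𝕜) k)) := by
  have hq2 : ‖q ^ 2‖ < 1 := norm_pow_lt_one_of_norm_lt_one hq two_ne_zero
  have hneg : ‖-q‖ < 1 := by rwa [norm_neg]
  set P := ∏' i : ℕ, (1 - q ^ 2 * (q ^ 2) ^ i)
  have hP : P ≠ 0 := tprod_one_sub_mul_pow_ne_zero hq2 hq2
  have hratio := tendsto_qPochhammer_sq_div_qPochhammer_two_mul hq2 hq2
  have htheta := tendsto_finsum_thetaCoeff_mul hneg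
    (summable_norm_pow_sq_mul_centralFactorial hneg k)
  simp only [neg_sq] at htheta
  have hlim := (hratio.mul htheta).const_mul ((-1) ^ k)
  rw [mul_inv_cancel_left₀ hP] at hlim
  refine hlim.congr fun N => ?_
  have hodd (i : ℕ) : 1 - q ^ (2 * i + 1) ≠ 0 :=
    one_sub_ne_zero_of_norm_lt_one (norm_pow_lt_one_of_norm_lt_one hq (Nat.succ_ne_zero _))
  rw [← factorial_mul_sum_macWeight N k fun i _ => hodd i, prod_div_one_add_eq_qPochhammer hq]
  have hsign : (-1 : 𝕜) ^ k * (-1) ^ k = 1 := by rw [← mul_pow, neg_one_mul, neg_neg, one_pow]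
  linear_combination (qPochhammer (q ^ 2) (q ^ 2) N ^ 2 / qPochhammer (q ^ 2) (q ^ 2) (2 * N) *
    (2 * k).factorial * qPochhammer q (q ^ 2) N ^ 2 *
    ∑ S ∈ powersetCard k (range N), ∏ i ∈ S, macWeight q i) * hsign

lemma tsum_neg_pow_sq_mul_centralFactorial [CharZero 𝕜] {q : 𝕜} (hq : ‖q‖ < 1) {k : ℕ}
    (hk : 1 ≤ k) :
    ∑' n : ℤ, (-q) ^ n.natAbs ^ 2 * centralFactorial (n : 𝕜) k =
      ∑' n : {n : ℕ // k ≤ n}, (-1) ^ (n : ℕ) * (2 * (n : ℕ)) *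
        ((((n : ℕ) + k - 1).factorial : 𝕜) / (((n : ℕ) - k).factorial : 𝕜)) *
          q ^ ((n : ℕ) ^ 2) := by
  have hsum := (summable_norm_pow_sq_mul_centralFactorial (q := -q) (by rwa [norm_neg]) k).of_norm
  rw [tsum_int_eq_two_nsmul_tsum_of_even hsum (fun n => by simp [centralFactorial_neg]) hk
    fun n hn => by simp [centralFactorial_natCast_eq_zero hn], two_nsmul, ← two_mul,
    ← tsum_mul_left]
  refine tsum_congr fun ⟨n, hn⟩ => ?_
  have hsign : (-q) ^ n ^ 2 = (-1) ^ n * q ^ n ^ 2 := by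
    rw [neg_pow, neg_one_pow_congr (show Even (n ^ 2) ↔ Even n by simp [Nat.even_pow])]
  have hfact : centralFactorial (n : 𝕜) k =
      n * (n + k - 1).factorial / ((n - k).factorial : 𝕜) :=
    eq_div_of_mul_eq (Nat.cast_ne_zero.mpr (Nat.factorial_ne_zero _))
      (centralFactorial_natCast_mul_factorial hk hn)
  simp only [Int.natAbs_natCast, Int.cast_natCast, hsign, hfact]
  ring

end Limits

/-- The increasing `k`-tuples of positive integers that index `macC`, as the order embeddings
`Fin k ↪o ℕ` with every value raised by one. -/
def orderEmbEquivStrictMonoPos (k : ℕ) :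
    (Fin k ↪o ℕ) ≃ {m : Fin k → ℕ // StrictMono m ∧ ∀ i, 0 < m i} where
  toFun e := ⟨fun i => e i + 1, fun _ _ h => Nat.succ_lt_succ (e.strictMono h),
    fun i => Nat.succ_pos (e i)⟩
  invFun m := OrderEmbedding.ofStrictMono (fun i => m.1 i - 1) fun i j h => by
    have := m.2.1 h
    have := m.2.2 i
    lia
  left_inv e := by ext i; simp
  right_inv m := by
    ext i
    exact Nat.sub_add_cancel (m.2.2 i)

lemma macC_eq_tsum_powersetCard (k : ℕ) (q : ℂ) :
    macC k q = ∑' S : Set.powersetCard ℕ k, ∏ i ∈ S.1, macWeight q i := by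
  rw [macC, ← (orderEmbEquivStrictMonoPos k).tsum_eq, ← Set.powersetCard.ofFinEmbEquiv.tsum_eq]
  refine tsum_congr fun e => ?_
  rw [Set.powersetCard.ofFinEmbEquiv_apply, Set.powersetCard.val_ofFinEmb, prod_map,
    ← prod_pow_eq_pow_sum, ← prod_div_distrib]
  exact prod_congr rfl fun i _ => rfl

lemma tendsto_sum_macWeight {q : ℂ} (hq : ‖q‖ < 1) (k : ℕ) :
    Tendsto (fun N => ∑ S ∈ powersetCard k (range N), ∏ i ∈ S, macWeight q i) atTop
      (𝓝 (macC k q)) := by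
  have hsum : Summable fun S : Finset ℕ => ∏ i ∈ S, macWeight q i :=
    summable_finsetProd_of_summable_norm (summable_norm_macWeight hq)
  rw [macC_eq_tsum_powersetCard]
  exact tendsto_sum_powersetCard_range hsum k

theorem stmt3 (k : ℕ) (hk : 1 ≤ k) (q : ℂ) (hq : ‖q‖ < 1) :
    ((2 * k).factorial : ℂ) * (∏' m : ℕ, (1 - q ^ (m + 1)) / (1 + q ^ (m + 1))) * macC k q =
      (-1) ^ k * ∑' n : {n : ℕ // k ≤ n},
        (-1) ^ (n : ℕ) * (2 * (n : ℕ)) *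
          ((((n : ℕ) + k - 1).factorial : ℂ) / (((n : ℕ) - k).factorial : ℂ)) *
            q ^ ((n : ℕ) ^ 2) := by
  have prod_limit := (tendsto_prod_div_one_add hq).comp (tendsto_id.const_mul_atTop' two_pos)
  have theta_limit := tendsto_factorial_mul_sum_macWeight hq k
  rw [tsum_neg_pow_sq_mul_centralFactorial hq hk] at theta_limit
  exact tendsto_nhds_unique ((prod_limit.const_mul _).mul (tendsto_sum_macWeight hq k)) theta_limit
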